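/- The upper tail of η_log satisfies lim_{s→∞} e^{2s}·η_log(s) = 12/π²; that is, η_log(s) ∼ (12/π²)·e^{−2s} as s → ∞. -/

import Mathlib

open Filter

/-- The limiting density of the logarithm of smallest denominators. -/
noncomputable def etaLog (s : ℝ) : ℝ :=
  if s ≤ 0 then 6 / Real.pi ^ 2 * Real.exp (2 * s)
  else if s ≤ Real.log 2 then 6 / Real.pi ^ 2 * (-Real.exp (2 * s) + 2 + 4 * s)
  else 6 / Real.pi ^ 2 * (-Real.exp (2 * s) + 2
    + 2 * Real.exp (2 * s) * Real.sqrt (1 / 4 - Real.exp (-2 * s))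
    - 4 * Real.log (1 / 2 + Real.sqrt (1 / 4 - Real.exp (-2 * s))))

/-!
Let `w` be the larger root of `w * (1 - w) = exp (-2 * s)`. For `log 2 ≤ s` the square root
disappears and `etaLog s = 12 / π ^ 2 * (1 - w⁻¹ - 2 * log w)`, so that `exp (2 * s) * etaLog s` is
a function of `w` alone. As `s → ∞` we have `w → 1`, and the factor `1 - w` in the denominator
is absorbed by the difference quotient of `log` at `1`.
-/

open Real Topology

/-- The larger root `w` of `w * (1 - w) = x`. For `x > 1 / 4` there is no real root, and the
convention for `√` gives the value `1 / 2`. -/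
noncomputable def largerRoot (x : ℝ) : ℝ := 1 / 2 + √(1 / 4 - x)

namespace largerRoot

lemma mul_one_sub_self {x : ℝ} (hx : x ≤ 1 / 4) : largerRoot x * (1 - largerRoot x) = x := by
  have hsq : √(1 / 4 - x) ^ 2 = 1 / 4 - x := sq_sqrt (sub_nonneg.2 hx)
  unfold largerRoot
  linear_combination -hsq

lemma apply_zero : largerRoot 0 = 1 := by
  have hsqrt : √(1 / 4 : ℝ) = 1 / 2 := by
    rw [sqrt_eq_iff_mul_self_eq_of_pos] <;> norm_num
  rw [largerRoot, sub_zero, hsqrt]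
  norm_num

lemma ne_one {x : ℝ} (hx : x ≤ 1 / 4) (hx₀ : x ≠ 0) : largerRoot x ≠ 1 := by
  intro h
  apply hx₀
  rw [← mul_one_sub_self hx, h, sub_self, mul_zero]

lemma continuous : Continuous largerRoot := by
  unfold largerRoot
  fun_prop

lemma tendsto_nhdsNE_zero : Tendsto largerRoot (𝓝[≠] 0) (𝓝[≠] 1) := by
  have hlim : Tendsto largerRoot (𝓝 0) (𝓝 1) := continuous.tendsto' 0 1 apply_zero
  have hsmall : ∀ᶠ x : ℝ in 𝓝[≠] 0, x ≤ 1 / 4 :=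
    nhdsWithin_le_nhds (eventually_le_nhds (by norm_num))
  refine tendsto_nhdsWithin_iff.2 ⟨hlim.mono_left nhdsWithin_le_nhds, ?_⟩
  filter_upwards [hsmall, self_mem_nhdsWithin] with x hx hx₀ using ne_one hx hx₀

end largerRoot

lemma exp_neg_two_mul_log_two : exp (-2 * log 2) = 1 / 4 := by
  rw [mul_comm, exp_mul, exp_log two_pos]
  norm_num

lemma exp_neg_two_mul_le_quarter {s : ℝ} (hs : log 2 ≤ s) : exp (-2 * s) ≤ 1 / 4 := by
  calc exp (-2 * s) ≤ exp (-2 * log 2) := exp_le_exp.2 (by linarith)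
    _ = 1 / 4 := exp_neg_two_mul_log_two

lemma etaLog_of_log_two_le {s : ℝ} (hs : log 2 ≤ s) :
    etaLog s = 6 / π ^ 2 * (-exp (2 * s) + 2 + 2 * exp (2 * s) * √(1 / 4 - exp (-2 * s))
      - 4 * log (1 / 2 + √(1 / 4 - exp (-2 * s)))) := by
  have hpos : 0 < log 2 := log_pos one_lt_two
  rcases hs.eq_or_lt with rfl | hlt
  · rw [etaLog, if_neg hpos.not_ge, if_pos le_rfl, exp_neg_two_mul_log_two, sub_self, sqrt_zero,
      add_zero, one_div 2, log_inv]
    ring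
  · rw [etaLog, if_neg (hpos.trans hlt).not_ge, if_neg hlt.not_ge]

lemma etaLog_eq_largerRoot {s : ℝ} (hs : log 2 ≤ s) :
    etaLog s = 12 / π ^ 2 *
      (1 - (largerRoot (exp (-2 * s)))⁻¹ - 2 * log (largerRoot (exp (-2 * s)))) := by
  have hroot := largerRoot.mul_one_sub_self (exp_neg_two_mul_le_quarter hs)
  have hsqrt : √(1 / 4 - exp (-2 * s)) = largerRoot (exp (-2 * s)) - 1 / 2 := by
    rw [largerRoot, add_sub_cancel_left]
  have hinv : exp (2 * s) * (1 - largerRoot (exp (-2 * s))) = (largerRoot (exp (-2 * s)))⁻¹ := by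
    refine eq_inv_of_mul_eq_one_left ?_
    rw [mul_assoc, mul_comm (1 - _), hroot, ← exp_add, neg_mul, add_neg_cancel, exp_zero]
  rw [etaLog_of_log_two_le hs, hsqrt, add_sub_cancel, ← hinv]
  ring

lemma tendsto_one_sub_inv_sub_two_mul_log_div :
    Tendsto (fun w : ℝ => (1 - w⁻¹ - 2 * log w) / (w * (1 - w))) (𝓝[≠] 1) (𝓝 1) := by
  have hslope : Tendsto (slope log 1) (𝓝[≠] 1) (𝓝 1) := by
    simpa only [inv_one] using (hasDerivAt_log one_ne_zero).tendsto_slope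
  have hinv : Tendsto (fun w : ℝ => w⁻¹) (𝓝[≠] 1) (𝓝 1) :=
    tendsto_nhdsWithin_of_tendsto_nhds (by simpa only [inv_one] using tendsto_inv₀ (one_ne_zero' ℝ))
  have hlim : Tendsto (fun w : ℝ => w⁻¹ * (2 * slope log 1 w - w⁻¹)) (𝓝[≠] 1) (𝓝 1) := by
    convert hinv.mul ((hslope.const_mul 2).sub hinv) using 2
    norm_num
  have hne_zero : ∀ᶠ w : ℝ in 𝓝[≠] 1, w ≠ 0 :=
    nhdsWithin_le_nhds (eventually_ne_nhds one_ne_zero)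
  refine hlim.congr' ?_
  filter_upwards [hne_zero, self_mem_nhdsWithin] with w hw₀ hw₁
  have hsub : w - 1 ≠ 0 := sub_ne_zero.2 hw₁
  have hsub' : 1 - w ≠ 0 := sub_ne_zero.2 (Ne.symm hw₁)
  rw [slope_def_field, log_one, sub_zero]
  field_simp
  ring

lemma tendsto_exp_neg_two_mul_atTop : Tendsto (fun s : ℝ => exp (-2 * s)) atTop (𝓝[≠] 0) :=
  (tendsto_exp_atBot_nhdsGT.mono_right (nhdsGT_le_nhdsNE 0)).comp
    (tendsto_id.const_mul_atTop_of_neg (by norm_num))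

theorem etaLog_upper_tail :
    Tendsto (fun s : ℝ => Real.exp (2 * s) * etaLog s) atTop
      (nhds (12 / Real.pi ^ 2)) := by
  have hroot : Tendsto (fun s : ℝ => largerRoot (exp (-2 * s))) atTop (𝓝[≠] 1) :=
    largerRoot.tendsto_nhdsNE_zero.comp tendsto_exp_neg_two_mul_atTop
  have hlim := (tendsto_one_sub_inv_sub_two_mul_log_div.comp hroot).const_mul (12 / π ^ 2)
  rw [mul_one] at hlim
  refine hlim.congr' ?_
  filter_upwards [eventually_ge_atTop (log 2)] with s hs
  rw [Function.comp_apply, largerRoot.mul_one_sub_self (exp_neg_two_mul_le_quarter hs),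
    etaLog_eq_largerRoot hs, neg_mul, exp_neg, div_inv_eq_mul]
  ring
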